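/- arXiv:2001.00474 — 2 statements merged into one kernel-verified Lean document; each statement's English description precedes it below -/
import Mathlib

section
/- Let Ψ ∈ PGL_{n+1}(F_q) be transitive on ℙ^n. Then the absolute fractional jump index of Ψ equals n+1; that is, every P ∈ U satisfies J_{P,Ψ} ≤ n+1, and there exists a point P ∈ U with Ψ^i(P) ∈ H for all i ∈ {1,…,n} (so that J_{P,Ψ} = n+1). -/
/-- The projective automorphism of `ℙ^n(K)` induced by an invertible matrix `M`. -/
noncomputable def projMap {K : Type*} [Field K] {n : ℕ} (M : GL (Fin (n + 1)) K) :
    Projectivization K (Fin (n + 1) → K) → Projectivization K (Fin (n + 1) → K) :=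
  Projectivization.map
    ((Matrix.GeneralLinearGroup.toLin M).toLinearEquiv :
      (Fin (n + 1) → K) →ₗ[K] (Fin (n + 1) → K))
    (Matrix.GeneralLinearGroup.toLin M).toLinearEquiv.injective

/-- The projective automorphism induced by `M` is transitive on `ℙ^n(K)`. -/
def ProjTransitive {K : Type*} [Field K] {n : ℕ} (M : GL (Fin (n + 1)) K) : Prop :=
  ∀ P Q : Projectivization K (Fin (n + 1) → K), ∃ k : ℕ, (projMap M)^[k] P = Q

/-- The affine chart `U = {X_n ≠ 0} ⊆ ℙ^n(K)`. -/
def affineChart (K : Type*) [Field K] (n : ℕ) : Set (Projectivization K (Fin (n + 1) → K)) :=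
  {P | P.rep (Fin.last n) ≠ 0}

/-- The hyperplane at infinity `H = {X_n = 0} ⊆ ℙ^n(K)`. -/
def hyperplaneAtInfinity (K : Type*) [Field K] (n : ℕ) :
    Set (Projectivization K (Fin (n + 1) → K)) :=
  {P | P.rep (Fin.last n) = 0}

/-!
Let `T` be the linear map given by `M` and let `φ` be the last coordinate, so that
`H = {φ = 0}`. By Cayley–Hamilton every power of `T` is a linear combination of `1, T, …, T ^ n`;
hence an orbit starting with `n + 1` consecutive points in `H` stays in `H` forever. This bounds
every jump by `n + 1` as soon as all orbits meet `U`, in particular when `[M]` is transitive.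

Conversely, the `n` linear conditions `φ (T v) = ⋯ = φ (T ^ n v) = 0` on the `n + 1` coordinates
of `v` have a nonzero solution. Its orbit lies in `H` at the times `1, …, n`, so by the bound
it must be in `U` at time `0`.
-/

section LinearAlgebra

theorem apply_pow_apply_eq_zero_of_forall_lt_finrank {R V W : Type*} [CommRing R] [Nontrivial R]
    [AddCommGroup V] [Module R V] [Module.Free R V] [Module.Finite R V]
    [AddCommMonoid W] [Module R W] (T : Module.End R V) (φ : V →ₗ[R] W) {v : V}
    (h : ∀ i < Module.finrank R V, φ ((T ^ i) v) = 0) (k : ℕ) : φ ((T ^ k) v) = 0 := by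
  set r : Polynomial R := Polynomial.X ^ k %ₘ T.charpoly with hr
  have coeff_r_eq_zero {i : ℕ} (hi : Module.finrank R V ≤ i) : r.coeff i = 0 := by
    refine Polynomial.coeff_eq_zero_of_degree_lt ?_
    calc r.degree < T.charpoly.degree := Polynomial.degree_modByMonic_lt _ T.charpoly_monic
      _ ≤ T.charpoly.natDegree := Polynomial.degree_le_natDegree
      _ ≤ i := by rw [T.charpoly_natDegree]; exact_mod_cast hi
  rw [T.pow_eq_aeval_mod_charpoly, ← hr, Polynomial.aeval_eq_sum_range, LinearMap.sum_apply,
    map_sum]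
  refine Finset.sum_eq_zero fun i _ => ?_
  rw [LinearMap.smul_apply, map_smul]
  rcases lt_or_ge i (Module.finrank R V) with hi | hi
  · rw [h i hi, smul_zero]
  · rw [coeff_r_eq_zero hi, zero_smul]

theorem exists_ne_zero_forall_apply_eq_zero_of_card_lt_finrank {K V ι : Type*} [DivisionRing K]
    [AddCommGroup V] [Module K V] [FiniteDimensional K V] [Fintype ι] (f : ι → V →ₗ[K] K)
    (h : Fintype.card ι < Module.finrank K V) : ∃ v : V, v ≠ 0 ∧ ∀ i, f i v = 0 := by
  have ker_ne_bot : LinearMap.ker (LinearMap.pi f) ≠ ⊥ :=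
    LinearMap.ker_ne_bot_of_finrank_lt (by rwa [Module.finrank_fintype_fun_eq_card])
  obtain ⟨v, hv, hv0⟩ := Submodule.exists_mem_ne_zero_of_ne_bot ker_ne_bot
  exact ⟨v, hv0, congrFun (LinearMap.mem_ker.1 hv)⟩

end LinearAlgebra

theorem projectivization_map_iterate {K V : Type*} [DivisionRing K] [AddCommGroup V] [Module K V]
    (T : Module.End K V) (hT : Function.Injective T) (k : ℕ) :
    (Projectivization.map T hT)^[k] =
      Projectivization.map (T ^ k) (Module.End.iterate_injective hT k) := by
  induction k with
  | zero => exact Projectivization.map_id.symm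
  | succ k ih => rw [Function.iterate_succ, ih]; exact (Projectivization.map_comp T hT _ _ _).symm

section ProjectiveSpace

variable {K : Type*} [Field K] {n : ℕ}

theorem mk_rep_apply_eq_zero_iff {ι : Type*} {v : ι → K} (hv : v ≠ 0) (i : ι) :
    (Projectivization.mk K v hv).rep i = 0 ↔ v i = 0 := by
  obtain ⟨a, ha⟩ := Projectivization.exists_smul_eq_mk_rep K v hv
  rw [← ha, Pi.smul_apply, Units.smul_def, smul_eq_zero_iff_right a.ne_zero]

theorem affineChart_nonempty : (affineChart K n).Nonempty := by
  have single_ne_zero : (Pi.single (Fin.last n) 1 : Fin (n + 1) → K) ≠ 0 :=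
    Pi.single_ne_zero_iff.2 one_ne_zero
  refine ⟨Projectivization.mk K _ single_ne_zero, ?_⟩
  rw [affineChart, Set.mem_ofPred_eq, ne_eq, mk_rep_apply_eq_zero_iff, Pi.single_eq_same]
  exact one_ne_zero

theorem notMem_affineChart_iff {P : Projectivization K (Fin (n + 1) → K)} :
    P ∉ affineChart K n ↔ P ∈ hyperplaneAtInfinity K n :=
  not_not

theorem projMap_iterate_mk_mem_hyperplaneAtInfinity_iff (M : GL (Fin (n + 1)) K)
    {v : Fin (n + 1) → K} (hv : v ≠ 0) (k : ℕ) :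
    (projMap M)^[k] (Projectivization.mk K v hv) ∈ hyperplaneAtInfinity K n ↔
      ((Matrix.toLin' M.val ^ k) v) (Fin.last n) = 0 := by
  rw [projMap, projectivization_map_iterate, Projectivization.map_mk]
  exact mk_rep_apply_eq_zero_iff _ _

theorem exists_le_projMap_iterate_mem_affineChart (M : GL (Fin (n + 1)) K)
    {P : Projectivization K (Fin (n + 1) → K)} (hP : ∃ k, (projMap M)^[k] P ∈ affineChart K n) :
    ∃ k ≤ n, (projMap M)^[k] P ∈ affineChart K n := by
  contrapose! hP
  simp only [notMem_affineChart_iff] at hP ⊢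
  induction P with | h v hv =>
  simp only [projMap_iterate_mk_mem_hyperplaneAtInfinity_iff] at hP ⊢
  refine apply_pow_apply_eq_zero_of_forall_lt_finrank _
    (LinearMap.proj (Fin.last n) : (Fin (n + 1) → K) →ₗ[K] K) fun i hi => hP i ?_
  rwa [Module.finrank_fin_fun, Nat.lt_succ_iff] at hi

theorem exists_forall_projMap_iterate_mem_hyperplaneAtInfinity (M : GL (Fin (n + 1)) K) :
    ∃ P, ∀ i : ℕ, 1 ≤ i → i ≤ n → (projMap M)^[i] P ∈ hyperplaneAtInfinity K n := by
  obtain ⟨v, hv, hvanish⟩ := exists_ne_zero_forall_apply_eq_zero_of_card_lt_finrank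
    (fun j : Fin n => LinearMap.proj (Fin.last n) ∘ₗ Matrix.toLin' M.val ^ (j.val + 1))
    (by rw [Fintype.card_fin, Module.finrank_fin_fun]; exact n.lt_succ_self)
  refine ⟨Projectivization.mk K v hv, fun i h1 hi => ?_⟩
  obtain ⟨j, rfl⟩ := Nat.exists_eq_add_of_le' h1
  exact (projMap_iterate_mk_mem_hyperplaneAtInfinity_iff M hv _).2 (hvanish ⟨j, hi⟩)

end ProjectiveSpace

theorem statement7_general {K : Type*} [Field K] (n : ℕ) (M : GL (Fin (n + 1)) K)
    (hmeets : ∀ P, ∃ k : ℕ, (projMap M)^[k] P ∈ affineChart K n) :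
    (∀ P, ∃ k : ℕ, 1 ≤ k ∧ k ≤ n + 1 ∧ (projMap M)^[k] P ∈ affineChart K n) ∧
      ∃ P ∈ affineChart K n, ∀ i : ℕ, 1 ≤ i → i ≤ n →
        (projMap M)^[i] P ∈ hyperplaneAtInfinity K n := by
  refine ⟨fun P => ?_, ?_⟩
  · obtain ⟨k, hk, hU⟩ := exists_le_projMap_iterate_mem_affineChart M (hmeets (projMap M P))
    exact ⟨k + 1, k.succ_pos, Nat.succ_le_succ hk, hU⟩
  · obtain ⟨P, hH⟩ := exists_forall_projMap_iterate_mem_hyperplaneAtInfinity M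
    obtain ⟨k, hk, hU⟩ := exists_le_projMap_iterate_mem_affineChart M (hmeets P)
    obtain rfl : k = 0 := by
      by_contra hk0
      exact notMem_affineChart_iff.2 (hH k (Nat.one_le_iff_ne_zero.2 hk0) hk) hU
    exact ⟨P, hU, hH⟩

/-- If `Ψ = [M] ∈ PGL_{n+1}(F_q)` is transitive on `ℙ^n`, then its absolute fractional jump
index equals `n + 1`: every `P ∈ U` admits `k` with `1 ≤ k ≤ n + 1` and `Ψ^k(P) ∈ U`, and
there exists a point `P ∈ U` with `Ψ^i(P) ∈ H` for all `i ∈ {1, …, n}` (so that its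
fractional jump index is exactly `n + 1`). -/
theorem statement7 {K : Type*} [Field K] [Fintype K] (n : ℕ) (hn : 0 < n)
    (M : GL (Fin (n + 1)) K) (htrans : ProjTransitive M) :
    (∀ P ∈ affineChart K n, ∃ k : ℕ, 1 ≤ k ∧ k ≤ n + 1 ∧
        (projMap M)^[k] P ∈ affineChart K n) ∧
      ∃ P ∈ affineChart K n, ∀ i : ℕ, 1 ≤ i → i ≤ n →
        (projMap M)^[i] P ∈ hyperplaneAtInfinity K n := by
  obtain ⟨Q, hQ⟩ := affineChart_nonempty (K := K) (n := n)
  refine (statement7_general n M fun P => ?_).imp_left fun h P _ => h P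
  obtain ⟨k, rfl⟩ := htrans P Q
  exact ⟨k, hQ⟩
end

section
/- Let Ψ ∈ PGL_{n+1}(F_q) act transitively on ℙ^n, and let ψ be its fractional jump. Then ψ acts transitively on A^n = F_q^n, i.e., for all u, v ∈ F_q^n there exists k ≥ 0 with ψ^k(u) = v. -/
/-- The embedding `π : A^n → U ⊆ ℙ^n(K)`, `(x_1, …, x_n) ↦ [x_1 : ⋯ : x_n : 1]`. -/
def toProj {K : Type*} [Field K] {n : ℕ} (x : Fin n → K) :
    Projectivization K (Fin (n + 1) → K) :=
  Projectivization.mk K (Fin.snoc x 1) (fun h => by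
    have h1 := congrFun h (Fin.last n)
    simp at h1)

/-- The inverse `π⁻¹ : U → A^n` of the affine embedding (junk values off `U`). -/
noncomputable def fromProj {K : Type*} [Field K] {n : ℕ}
    (P : Projectivization K (Fin (n + 1) → K)) : Fin n → K :=
  fun i => P.rep (Fin.castSucc i) / P.rep (Fin.last n)

/-- The fractional jump index `J_{π(x),Ψ} = min {k ≥ 1 : Ψ^k(π(x)) ∈ U}`. -/
noncomputable def jumpIndex {K : Type*} [Field K] {n : ℕ} (M : GL (Fin (n + 1)) K)
    (x : Fin n → K) : ℕ :=
  sInf {k : ℕ | 1 ≤ k ∧ (projMap M)^[k] (toProj x) ∈ affineChart K n}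

/-- The fractional jump `ψ(x) = π⁻¹(Ψ^{J_{π(x),Ψ}}(π(x)))` of the projective automorphism
induced by `M`. -/
noncomputable def fracJump {K : Type*} [Field K] {n : ℕ} (M : GL (Fin (n + 1)) K)
    (x : Fin n → K) : Fin n → K :=
  fromProj ((projMap M)^[jumpIndex M x] (toProj x))

/-!
The fractional jump is the first return map of `Ψ` to the chart `U`, read in affine coordinates.
A `Ψ`-orbit segment that ends in `U` is cut by its visits to `U` into pieces, each of which is a
single step of the first return map, so the first return map reaches every point of `U` which `Ψ`
reaches.
-/

section FirstReturn

variable {α : Type*} (f : α → α) (s : Set α) {x : α} {m : ℕ}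

/-- The first return time of `x` to `s` under `f`: the least `k ≥ 1` with `f^[k] x ∈ s`. If the
orbit of `x` never returns to `s`, its value is `0`. -/
noncomputable def firstReturnTime (x : α) : ℕ :=
  sInf {k : ℕ | 1 ≤ k ∧ f^[k] x ∈ s}

/-- The first return map of `f` to `s`, on all of `α` rather than on `s` only. It fixes the points
whose orbit never returns to `s`. -/
noncomputable def firstReturnMap (x : α) : α :=
  f^[firstReturnTime f s x] x

variable {f s}

theorem firstReturnTime_le (hm : 0 < m) (hx : f^[m] x ∈ s) : firstReturnTime f s x ≤ m :=
  Nat.sInf_le ⟨hm, hx⟩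

theorem firstReturnTime_pos (hm : 0 < m) (hx : f^[m] x ∈ s) : 0 < firstReturnTime f s x :=
  (Nat.sInf_mem (s := {k : ℕ | 1 ≤ k ∧ f^[k] x ∈ s}) ⟨m, hm, hx⟩).1

theorem firstReturnMap_mem (hx : x ∈ s) : firstReturnMap f s x ∈ s := by
  rcases Set.eq_empty_or_nonempty {k : ℕ | 1 ≤ k ∧ f^[k] x ∈ s} with hempty | hne
  · simpa only [firstReturnMap, firstReturnTime, hempty, Nat.sInf_empty,
      Function.iterate_zero_apply] using hx
  · exact (Nat.sInf_mem hne).2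

theorem iterate_sub_firstReturnTime_firstReturnMap (hm : firstReturnTime f s x ≤ m) :
    f^[m - firstReturnTime f s x] (firstReturnMap f s x) = f^[m] x := by
  rw [firstReturnMap, ← Function.iterate_add_apply, Nat.sub_add_cancel hm]

theorem exists_iterate_firstReturnMap_eq (hx : f^[m] x ∈ s) :
    ∃ k : ℕ, (firstReturnMap f s)^[k] x = f^[m] x := by
  induction m using Nat.strong_induction_on generalizing x with
  | _ m ih =>
    rcases m.eq_zero_or_pos with rfl | hm
    · exact ⟨0, rfl⟩
    · have hpos := firstReturnTime_pos hm hx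
      have hrest := iterate_sub_firstReturnTime_firstReturnMap (firstReturnTime_le hm hx)
      obtain ⟨k, hk⟩ := ih (m - firstReturnTime f s x) (Nat.sub_lt hm hpos) (hrest ▸ hx)
      exact ⟨k + 1, hk.trans hrest⟩

end FirstReturn

section FractionalJump

variable {K : Type*} [Field K] {n : ℕ}

theorem mk_mem_affineChart_iff {v : Fin (n + 1) → K} (hv : v ≠ 0) :
    Projectivization.mk K v hv ∈ affineChart K n ↔ v (Fin.last n) ≠ 0 := by
  obtain ⟨a, ha⟩ := Projectivization.exists_smul_eq_mk_rep K v hv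
  simp [affineChart, ← ha, Units.smul_def]

theorem fromProj_mk {v : Fin (n + 1) → K} (hv : v ≠ 0) (i : Fin n) :
    fromProj (Projectivization.mk K v hv) i = v i.castSucc / v (Fin.last n) := by
  obtain ⟨a, ha⟩ := Projectivization.exists_smul_eq_mk_rep K v hv
  simp [fromProj, ← ha, Units.smul_def, mul_div_mul_left]

theorem toProj_mem_affineChart (x : Fin n → K) : toProj x ∈ affineChart K n := by
  simp [toProj, mk_mem_affineChart_iff]

theorem fromProj_toProj (x : Fin n → K) : fromProj (toProj x) = x := by
  ext i
  simp [toProj, fromProj_mk]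

theorem toProj_injective : Function.Injective (toProj : (Fin n → K) → _) :=
  Function.LeftInverse.injective fromProj_toProj

theorem toProj_fromProj {P : Projectivization K (Fin (n + 1) → K)} (hP : P ∈ affineChart K n) :
    toProj (fromProj P) = P := by
  induction P using Projectivization.ind with
  | h v hv =>
    have hlast : v (Fin.last n) ≠ 0 := (mk_mem_affineChart_iff hv).1 hP
    refine (Projectivization.mk_eq_mk_iff' ..).2 ⟨(v (Fin.last n))⁻¹, funext fun i => ?_⟩
    cases i using Fin.lastCases with
    | last => simp [hlast]
    | cast i => simp [fromProj_mk, div_eq_inv_mul]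

theorem semiconj_toProj_fracJump (M : GL (Fin (n + 1)) K) :
    Function.Semiconj toProj (fracJump M) (firstReturnMap (projMap M) (affineChart K n)) :=
  fun x => toProj_fromProj (firstReturnMap_mem (toProj_mem_affineChart x))

theorem statement9_general (M : GL (Fin (n + 1)) K) {u v : Fin n → K}
    (h : ∃ m : ℕ, (projMap M)^[m] (toProj u) = toProj v) :
    ∃ k : ℕ, (fracJump M)^[k] u = v := by
  obtain ⟨m, hm⟩ := h
  obtain ⟨k, hk⟩ := exists_iterate_firstReturnMap_eq (hm ▸ toProj_mem_affineChart v)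
  refine ⟨k, toProj_injective ?_⟩
  rw [(semiconj_toProj_fracJump M).iterate_right k u, hk, hm]

end FractionalJump

/-- If `Ψ = [M] ∈ PGL_{n+1}(F_q)` acts transitively on `ℙ^n`, then its fractional jump `ψ`
acts transitively on `A^n = F_q^n`. -/
theorem statement9 {K : Type*} [Field K] [Fintype K] (n : ℕ) (hn : 0 < n)
    (M : GL (Fin (n + 1)) K) (htrans : ProjTransitive M) :
    ∀ u v : Fin n → K, ∃ k : ℕ, (fracJump M)^[k] u = v :=
  fun u v => statement9_general M (htrans (toProj u) (toProj v))
end
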